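/- For every real β > 1: the family (c_β(k))_{k ∈ ℤ} is absolutely summable, the function h_β : ℝ → ℂ defined by h_β(x) = ∑_{k ∈ ℤ} c_β(k) e^{2πikx} is continuous on ℝ, and h_β(x) is real (its imaginary part is 0) for every x ∈ ℝ. -/

import Mathlib

noncomputable section

/-- The Fourier coefficients `c_β(k)` from Delange's theorem. -/
def delangeCoeff (β : ℝ) (k : ℤ) : ℂ :=
  if k = 0 then
    ((((β : ℂ) - 1) / (2 * Real.log β)) * (Real.log (2 * Real.pi) - 1) - ((β : ℂ) + 1) / 4)
  else
    -(((β : ℂ) - 1) / (2 * Real.pi * Complex.I * k)) *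
      (1 + 2 * Real.pi * Complex.I * k / Real.log β)⁻¹ *
      riemannZeta (2 * Real.pi * Complex.I * k / Real.log β)

lemma aux_term (n : ℝ) (hn : 1 ≤ n) (s : ℂ) (hs : 1 < s.re) :
    ‖(n : ℂ) ^ (-s) - ((n : ℂ) ^ (1 - s) - ((n + 1 : ℝ) : ℂ) ^ (1 - s)) / (s - 1)‖
      ≤ 2 * ‖s‖ ^ (1 / 4 : ℝ) * n ^ (-(5 / 4) : ℝ) := by
  have hn0 : 0 < n := by linarith
  have hs1 : s - 1 ≠ 0 := by
    intro h
    have : s = 1 := by linear_combination h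
    rw [this] at hs; simp at hs
  have hs0 : s ≠ 0 := by
    rintro rfl; simp at hs; linarith
  have hsn : 0 < ‖s‖ := by positivity
  -- pointwise bounds
  have key : ∀ B : ℝ, (∀ x ∈ Set.Icc n (n + 1), ‖(n : ℂ) ^ (-s) - (x : ℂ) ^ (-s)‖ ≤ B) →
      ‖(n : ℂ) ^ (-s) - ((n : ℂ) ^ (1 - s) - ((n + 1 : ℝ) : ℂ) ^ (1 - s)) / (s - 1)‖ ≤ B := by
    intro B hB
    have hd : ∀ x ∈ Set.Icc n (n + 1), HasDerivWithinAt
        (fun x : ℝ => (x : ℂ) * (n : ℂ) ^ (-s) - (x : ℂ) ^ (1 - s) / (1 - s))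
        ((n : ℂ) ^ (-s) - (x : ℂ) ^ (-s)) (Set.Icc n (n + 1)) x := by
      intro x hx
      have hx0 : x ≠ 0 := by linarith [hx.1]
      have h1 := hasDerivAt_ofReal_cpow_const' (x := x) hx0 (r := -s) (by
        intro h; apply hs1; linear_combination -h)
      have h2 : HasDerivAt (fun x : ℝ => (x : ℂ) * (n : ℂ) ^ (-s)) (1 * (n : ℂ) ^ (-s)) x :=
        (Complex.ofRealCLM.hasDerivAt (x := x)).mul_const _
      rw [one_mul] at h2
      have h3 := (h2.sub h1).hasDerivWithinAt (s := Set.Icc n (n + 1))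
      have e : -s + 1 = 1 - s := by ring
      rw [e] at h3
      exact h3
    have := (convex_Icc n (n + 1)).norm_image_sub_le_of_norm_hasDerivWithin_le hd hB
      (Set.left_mem_Icc.2 (by linarith)) (Set.right_mem_Icc.2 (by linarith))
    have e1 : ‖(n + 1) - n‖ = 1 := by simp
    rw [e1, mul_one] at this
    refine le_trans (le_of_eq ?_) this
    congr 1
    have : (1 : ℂ) - s ≠ 0 := by intro h; apply hs1; linear_combination -h
    push_cast
    field_simp
    ring
  have normle : ∀ x ∈ Set.Icc n (n + 1), ‖(x : ℂ) ^ (-s)‖ ≤ n⁻¹ := by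
    intro x hx
    have hx0 : 0 < x := by linarith [hx.1]
    rw [Complex.norm_cpow_eq_rpow_re_of_pos hx0]
    calc x ^ (-s).re ≤ x ^ (-1 : ℝ) :=
          Real.rpow_le_rpow_of_exponent_le (by linarith [hx.1]) (by simp; linarith)
      _ = x⁻¹ := Real.rpow_neg_one x
      _ ≤ n⁻¹ := inv_anti₀ hn0 hx.1
  have b1 := key (2 * n⁻¹) (by
    intro x hx
    refine (norm_sub_le _ _).trans ?_
    have := normle x hx
    have := normle n ⟨le_rfl, by linarith⟩
    linarith)
  have b2 := key (‖s‖ * n ^ (-2 : ℝ)) (by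
    intro x hx
    have hd : ∀ y ∈ Set.Icc n (n + 1), HasDerivWithinAt (fun y : ℝ => (y : ℂ) ^ (-s))
        (-s * (y : ℂ) ^ (-s - 1)) (Set.Icc n (n + 1)) y := by
      intro y hy
      have hy0 : y ≠ 0 := by linarith [hy.1]
      exact (hasDerivAt_ofReal_cpow_const hy0 (by simpa using hs0)).hasDerivWithinAt
    have hb : ∀ y ∈ Set.Icc n (n + 1), ‖-s * (y : ℂ) ^ (-s - 1)‖ ≤ ‖s‖ * n ^ (-2 : ℝ) := by
      intro y hy
      have hy0 : 0 < y := by linarith [hy.1]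
      rw [norm_mul, norm_neg, Complex.norm_cpow_eq_rpow_re_of_pos hy0]
      gcongr
      calc y ^ (-s - 1).re ≤ y ^ (-2 : ℝ) :=
            Real.rpow_le_rpow_of_exponent_le (by linarith [hy.1]) (by simp; linarith)
        _ ≤ n ^ (-2 : ℝ) := Real.rpow_le_rpow_of_nonpos hn0 hy.1 (by norm_num)
    have := (convex_Icc n (n + 1)).norm_image_sub_le_of_norm_hasDerivWithin_le hd hb
      hx (Set.left_mem_Icc.2 (by linarith))
    refine this.trans ?_
    have : ‖n - x‖ ≤ 1 := by
      rw [Real.norm_eq_abs, abs_le]; constructor <;> linarith [hx.1, hx.2]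
    exact mul_le_of_le_one_right (by positivity) this)
  generalize ‖(n : ℂ) ^ (-s) - ((n : ℂ) ^ (1 - s) - ((n + 1 : ℝ) : ℂ) ^ (1 - s)) / (s - 1)‖ = X at b1 b2
  by_cases hX : X ≤ 0
  · exact hX.trans (by positivity)
  push Not at hX
  calc X = X ^ (3 / 4 : ℝ) * X ^ (1 / 4 : ℝ) := by
        rw [← Real.rpow_add hX]; norm_num
    _ ≤ (2 * n⁻¹) ^ (3 / 4 : ℝ) * (‖s‖ * n ^ (-2 : ℝ)) ^ (1 / 4 : ℝ) := by gcongr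
    _ = 2 ^ (3 / 4 : ℝ) * ‖s‖ ^ (1 / 4 : ℝ) * n ^ (-(5 / 4) : ℝ) := by
        rw [Real.mul_rpow (by norm_num) (by positivity), Real.mul_rpow (by positivity) (by positivity),
          ← Real.rpow_mul hn0.le, ← Real.rpow_neg_one n, ← Real.rpow_mul hn0.le]
        have : n ^ (-(5 / 4) : ℝ) = n ^ (-1 * (3 / 4) : ℝ) * n ^ (-2 * (1 / 4) : ℝ) := by
          rw [← Real.rpow_add hn0]; norm_num
        rw [this]; ring
    _ ≤ 2 * ‖s‖ ^ (1 / 4 : ℝ) * n ^ (-(5 / 4) : ℝ) := by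
        gcongr
        calc (2 : ℝ) ^ (3 / 4 : ℝ) ≤ 2 ^ (1 : ℝ) :=
              Real.rpow_le_rpow_of_exponent_le (by norm_num) (by norm_num)
          _ = 2 := by simp

lemma aux_zeta : ∃ C : ℝ, 0 ≤ C ∧ ∀ s : ℂ, 1 < s.re →
    ‖riemannZeta s - 1 / (s - 1)‖ ≤ C * ‖s‖ ^ (1 / 4 : ℝ) := by
  have hsum : Summable (fun n : ℕ => ((n : ℝ) + 1) ^ (-(5 / 4) : ℝ)) := by
    have := (summable_nat_add_iff 1).2 (Real.summable_nat_rpow (p := -(5 / 4)).2 (by norm_num))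
    simpa using this
  refine ⟨2 * ∑' n : ℕ, ((n : ℝ) + 1) ^ (-(5 / 4) : ℝ), by positivity, ?_⟩
  intro s hs
  have hs1 : s - 1 ≠ 0 := by
    intro h
    have : s = 1 := by linear_combination h
    rw [this] at hs; simp at hs
  have hps : ∀ N : ℕ, ∑ n ∈ Finset.range N, (((n + 1 : ℝ) : ℂ) ^ (-s) -
      (((n + 1 : ℝ) : ℂ) ^ (1 - s) - ((n + 1 + 1 : ℝ) : ℂ) ^ (1 - s)) / (s - 1)) =
      ∑ n ∈ Finset.range N, 1 / ((n : ℂ) + 1) ^ s - (1 - ((N + 1 : ℝ) : ℂ) ^ (1 - s)) / (s - 1) := by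
    intro N
    induction N with
    | zero => simp
    | succ k ih =>
      rw [Finset.sum_range_succ, ih, Finset.sum_range_succ, Complex.cpow_neg]
      push_cast
      field_simp
      ring
  have hsm : Summable (fun n : ℕ => 1 / ((n : ℂ) + 1) ^ s) := by
    have := (summable_nat_add_iff 1).2 (Complex.summable_one_div_nat_cpow.2 hs)
    simpa using this
  have t1 : Filter.Tendsto (fun N : ℕ => ∑ n ∈ Finset.range N, 1 / ((n : ℂ) + 1) ^ s) Filter.atTop
      (nhds (riemannZeta s)) := by
    rw [zeta_eq_tsum_one_div_nat_add_one_cpow hs]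
    exact hsm.hasSum.tendsto_sum_nat
  have t2 : Filter.Tendsto (fun N : ℕ => ((N + 1 : ℝ) : ℂ) ^ (1 - s)) Filter.atTop (nhds 0) := by
    rw [tendsto_zero_iff_norm_tendsto_zero]
    have : ∀ N : ℕ, ‖((N + 1 : ℝ) : ℂ) ^ (1 - s)‖ = (N + 1 : ℝ) ^ (-(s.re - 1)) := by
      intro N
      rw [Complex.norm_cpow_eq_rpow_re_of_pos (by positivity)]; simp
    simp_rw [this]
    have h := (tendsto_rpow_neg_atTop (y := s.re - 1) (by linarith))
    exact h.comp (Filter.tendsto_atTop_add_const_right _ _ tendsto_natCast_atTop_atTop)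
  have t3 := t1.sub ((tendsto_const_nhds (x := (1 : ℂ))).sub t2 |>.div_const (s - 1))
  simp_rw [← hps] at t3
  rw [sub_zero] at t3
  refine le_of_tendsto t3.norm (Filter.Eventually.of_forall fun N => ?_)
  refine (norm_sum_le _ _).trans ?_
  calc _ ≤ ∑ n ∈ Finset.range N, 2 * ‖s‖ ^ (1 / 4 : ℝ) * ((n : ℝ) + 1) ^ (-(5 / 4) : ℝ) :=
        Finset.sum_le_sum fun n _ => aux_term _ (by simp) s hs
    _ = 2 * ‖s‖ ^ (1 / 4 : ℝ) * ∑ n ∈ Finset.range N, ((n : ℝ) + 1) ^ (-(5 / 4) : ℝ) := by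
        rw [Finset.mul_sum]
    _ ≤ 2 * ‖s‖ ^ (1 / 4 : ℝ) * ∑' n : ℕ, ((n : ℝ) + 1) ^ (-(5 / 4) : ℝ) := by
        gcongr
        exact hsum.sum_le_tsum _ (fun i _ => by positivity)
    _ = _ := by ring

lemma aux_zeta_one : ∃ C : ℝ, 0 ≤ C ∧ ∀ s : ℂ, s.re = 1 → s ≠ 1 →
    ‖riemannZeta s - 1 / (s - 1)‖ ≤ C * ‖s‖ ^ (1 / 4 : ℝ) := by
  obtain ⟨C, hC, h⟩ := aux_zeta
  refine ⟨C, hC, fun s hs hs1 => ?_⟩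
  have hs1' : s - 1 ≠ 0 := sub_ne_zero.2 hs1
  have hs0 : ‖s‖ ≠ 0 := by
    rw [norm_ne_zero_iff]; rintro rfl; simp at hs
  have hc1 : ContinuousAt (fun z : ℂ => ‖riemannZeta z - 1 / (z - 1)‖) s := by
    have := (differentiableAt_riemannZeta hs1).continuousAt
    fun_prop (disch := assumption)
  have hc2 : ContinuousAt (fun z : ℂ => C * ‖z‖ ^ (1 / 4 : ℝ)) s := by
    fun_prop (disch := norm_num)
  have hl : Filter.Tendsto (fun e : ℝ => s + e) (nhdsWithin 0 (Set.Ioi 0)) (nhds s) := by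
    have : Continuous (fun e : ℝ => s + e) := by fun_prop
    have := this.tendsto 0
    simp only [Complex.ofReal_zero, add_zero] at this
    exact this.mono_left nhdsWithin_le_nhds
  refine le_of_tendsto_of_tendsto (hc1.tendsto.comp hl) (hc2.tendsto.comp hl) ?_
  filter_upwards [self_mem_nhdsWithin] with e he
  have he' : (0 : ℝ) < e := he
  exact h _ (by simp [hs, he'])

lemma aux_gamma (t : ℝ) (ht : t ≠ 0) :
    ‖Complex.Gamma (1 - t * Complex.I)‖ ^ 2 = Real.pi * t / Real.sinh (Real.pi * t) := by
  have h1 := Complex.Gamma_mul_Gamma_one_sub (t * Complex.I)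
  have h2 := Complex.Gamma_add_one (t * Complex.I) (by simp [ht])
  have h3 : (starRingEnd ℂ) (Complex.Gamma (1 - t * Complex.I)) = Complex.Gamma (t * Complex.I + 1) := by
    rw [← Complex.Gamma_conj]; congr 1; simp; ring
  have h4 : Complex.sin (Real.pi * (t * Complex.I)) = Real.sinh (Real.pi * t) * Complex.I := by
    rw [← mul_assoc, Complex.sin_mul_I]; push_cast; rfl
  have hsh : Real.sinh (Real.pi * t) ≠ 0 := by
    rw [Ne, Real.sinh_eq_zero]; simp [ht, Real.pi_ne_zero]
  rw [h4] at h1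
  have h5 : ((‖Complex.Gamma (1 - t * Complex.I)‖ ^ 2 : ℝ) : ℂ) =
      ((Real.pi * t / Real.sinh (Real.pi * t) : ℝ) : ℂ) := by
    push_cast
    rw [← Complex.mul_conj', h3, h2]
    have hsh' : (Real.sinh (Real.pi * t) : ℂ) ≠ 0 := by exact_mod_cast hsh
    rw [← Complex.ofReal_mul, ← Complex.ofReal_sinh]
    calc _ = t * Complex.I * (Complex.Gamma (t * Complex.I) * Complex.Gamma (1 - t * Complex.I)) := by ring
      _ = _ := by rw [h1]; push_cast; field_simp
  exact_mod_cast h5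

lemma aux_fe (t : ℝ) (ht : t ≠ 0) :
    ‖riemannZeta (t * Complex.I)‖ ≤ |t| ^ (1 / 2 : ℝ) * ‖riemannZeta (1 - t * Complex.I)‖ := by
  have hfe := riemannZeta_one_sub (s := 1 - t * Complex.I) (by
    intro n h
    have := congrArg Complex.im h
    simp [ht] at this) (by simp [ht])
  rw [sub_sub_cancel] at hfe
  have hg := aux_gamma t ht
  have hcos : ‖Complex.cos (Real.pi * (1 - t * Complex.I) / 2)‖ = |Real.sinh (Real.pi * t / 2)| := by
    have : (Real.pi * (1 - t * Complex.I) / 2 : ℂ) = Real.pi / 2 - ((Real.pi * t / 2 : ℝ) : ℂ) * Complex.I := by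
      push_cast; ring
    rw [this, Complex.cos_pi_div_two_sub, Complex.sin_mul_I, ← Complex.ofReal_sinh, norm_mul,
      Complex.norm_I, mul_one, Complex.norm_real, Real.norm_eq_abs]
  have hpow : ‖(2 * Real.pi : ℂ) ^ (-(1 - t * Complex.I))‖ = (2 * Real.pi)⁻¹ := by
    have : (2 * Real.pi : ℂ) = ((2 * Real.pi : ℝ) : ℂ) := by push_cast; rfl
    rw [this, Complex.norm_cpow_eq_rpow_re_of_pos (by positivity), ← Real.rpow_neg_one]
    simp
  rw [hfe, norm_mul, norm_mul, norm_mul, norm_mul, hpow, hcos]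
  gcongr
  have hR : (|t| ^ (1 / 2 : ℝ)) ^ 2 = |t| := by
    rw [← Real.sqrt_eq_rpow, Real.sq_sqrt (abs_nonneg t)]
  refine (sq_le_sq₀ (by positivity) (by positivity)).1 ?_
  have hsh : Real.sinh (Real.pi * t / 2) ≠ 0 := by
    rw [Ne, Real.sinh_eq_zero]; simp [ht, Real.pi_ne_zero]
  have hdbl : Real.sinh (Real.pi * t) =
      2 * Real.sinh (Real.pi * t / 2) * Real.cosh (Real.pi * t / 2) := by
    rw [← Real.sinh_two_mul]; congr 1; ring
  have hch := Real.cosh_pos (Real.pi * t / 2)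
  have hle : |Real.sinh (Real.pi * t / 2)| ≤ Real.cosh (Real.pi * t / 2) := by
    apply abs_le_of_sq_le_sq _ hch.le
    have := Real.cosh_sq (Real.pi * t / 2)
    linarith
  rw [hR, mul_pow, mul_pow, mul_pow, hg, hdbl, sq_abs, Complex.norm_ofNat]
  have hpi := Real.pi_gt_three
  have e : 2 ^ 2 * (2 * Real.pi)⁻¹ ^ 2 * (Real.pi * t / (2 * Real.sinh (Real.pi * t / 2) *
      Real.cosh (Real.pi * t / 2))) * Real.sinh (Real.pi * t / 2) ^ 2 =
      t * (Real.sinh (Real.pi * t / 2) / Real.cosh (Real.pi * t / 2)) * (1 / (2 * Real.pi)) := by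
    field_simp
    try norm_num
  rw [e]
  refine (le_abs_self _).trans ?_
  rw [abs_mul, abs_mul, abs_div, abs_of_pos hch]
  have q1 : |Real.sinh (Real.pi * t / 2)| / Real.cosh (Real.pi * t / 2) ≤ 1 :=
    (div_le_one hch).2 hle
  have q2 : |1 / (2 * Real.pi)| ≤ 1 := by
    rw [abs_of_pos (by positivity), div_le_one (by positivity)]; linarith
  calc _ ≤ |t| * 1 * 1 := by gcongr
    _ = |t| := by ring

lemma aux_bound (c : ℝ) (hc : 0 < c) : ∃ K : ℝ, ∀ t : ℝ, c ≤ |t| →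
    ‖riemannZeta (t * Complex.I)‖ ≤ K * |t| ^ (3 / 4 : ℝ) := by
  obtain ⟨C, hC, h⟩ := aux_zeta_one
  refine ⟨c ^ (-(5 / 4) : ℝ) + C * (1 / c + 1) ^ (1 / 4 : ℝ), fun t hct => ?_⟩
  have hta : 0 < |t| := by linarith
  have ht : t ≠ 0 := abs_pos.1 hta
  have h1 := h (1 - t * Complex.I) (by simp) (by simp [ht])
  have h2 : ‖riemannZeta (1 - t * Complex.I)‖ ≤
      |t|⁻¹ + C * ‖1 - t * Complex.I‖ ^ (1 / 4 : ℝ) := by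
    have h3 : ‖1 / (1 - t * Complex.I - 1)‖ = |t|⁻¹ := by
      rw [norm_div, sub_sub_cancel_left, norm_neg, norm_mul, Complex.norm_I, Complex.norm_real]
      simp
    have := norm_le_norm_add_norm_sub' (riemannZeta (1 - t * Complex.I)) (1 / (1 - t * Complex.I - 1))
    linarith
  have h4 : ‖1 - t * Complex.I‖ ≤ (1 / c + 1) * |t| := by
    have : ‖1 - t * Complex.I‖ ≤ 1 + |t| := by
      refine (norm_sub_le _ _).trans ?_
      simp
    have : 1 ≤ 1 / c * |t| := by
      rw [div_mul_eq_mul_div, one_mul, le_div_iff₀ hc]; linarith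
    linarith
  have h5 : |t|⁻¹ ≤ c ^ (-(5 / 4) : ℝ) * |t| ^ (1 / 4 : ℝ) := by
    calc |t|⁻¹ = |t| ^ (-(5 / 4) : ℝ) * |t| ^ (1 / 4 : ℝ) := by
          rw [← Real.rpow_add hta, ← Real.rpow_neg_one]; norm_num
      _ ≤ _ := by
          gcongr ?_ * _
          exact Real.rpow_le_rpow_of_nonpos hc hct (by norm_num)
  have h6 : ‖1 - t * Complex.I‖ ^ (1 / 4 : ℝ) ≤ (1 / c + 1) ^ (1 / 4 : ℝ) * |t| ^ (1 / 4 : ℝ) := by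
    rw [← Real.mul_rpow (by positivity) hta.le]
    gcongr
  calc _ ≤ |t| ^ (1 / 2 : ℝ) * ‖riemannZeta (1 - t * Complex.I)‖ := aux_fe t ht
    _ ≤ |t| ^ (1 / 2 : ℝ) * (c ^ (-(5 / 4) : ℝ) * |t| ^ (1 / 4 : ℝ) +
        C * ((1 / c + 1) ^ (1 / 4 : ℝ) * |t| ^ (1 / 4 : ℝ))) := by
        gcongr
        refine h2.trans ?_
        gcongr
    _ = _ := by
        have : |t| ^ (3 / 4 : ℝ) = |t| ^ (1 / 2 : ℝ) * |t| ^ (1 / 4 : ℝ) := by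
          rw [← Real.rpow_add hta]; norm_num
        rw [this]; ring

lemma aux_conj (β : ℝ) (k : ℤ) :
    (starRingEnd ℂ) (delangeCoeff β k) = delangeCoeff β (-k) := by
  unfold delangeCoeff
  by_cases hk : k = 0
  · simp [hk, Complex.conj_ofReal, map_ofNat]
  · rw [if_neg hk, if_neg (by simpa using hk)]
    simp only [map_mul, map_neg, map_div₀, map_inv₀, map_add, map_sub, ← riemannZeta_conj, map_one,
      Complex.conj_ofReal, Complex.conj_I, map_ofNat, map_intCast]
    congr 3 <;> push_cast <;> ring

lemma aux_summable (β : ℝ) (hβ : 1 < β) : Summable (fun k : ℤ => ‖delangeCoeff β k‖) := by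
  have hl : 0 < Real.log β := Real.log_pos hβ
  set c := 2 * Real.pi / Real.log β with hcdef
  have hc : 0 < c := by positivity
  obtain ⟨K, hK⟩ := aux_bound c hc
  have hb : 0 < β - 1 := by linarith
  have hs := (Real.summable_abs_int_rpow (b := 5 / 4) (by norm_num)).mul_left
    ((β - 1) / (2 * Real.pi) * c⁻¹ * (K * c ^ (3 / 4 : ℝ)))
  refine Summable.of_norm_bounded_eventually hs ?_
  rw [Filter.eventually_cofinite]
  refine (Set.finite_singleton (0 : ℤ)).subset ?_
  intro k hk
  by_contra hk0
  apply hk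
  have hk0' : k ≠ 0 := hk0
  have hka : (1 : ℝ) ≤ |(k : ℝ)| := by exact_mod_cast Int.one_le_abs hk0'
  have hkp : 0 < |(k : ℝ)| := by linarith
  have hct : |c * k| = c * |(k : ℝ)| := by rw [abs_mul, abs_of_pos hc]
  have hz := hK (c * k) (by rw [hct]; nlinarith)
  have e : (2 * Real.pi * Complex.I * k / Real.log β : ℂ) = ((c * k : ℝ) : ℂ) * Complex.I := by
    rw [hcdef]; push_cast; ring
  rw [norm_norm]
  unfold delangeCoeff
  rw [if_neg hk0', e, norm_mul, norm_mul]
  have n1 : ‖-(((β : ℂ) - 1) / (2 * Real.pi * Complex.I * k))‖ =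
      (β - 1) / (2 * Real.pi) * |(k : ℝ)|⁻¹ := by
    have : ((β : ℂ) - 1) = ((β - 1 : ℝ) : ℂ) := by push_cast; rfl
    rw [this, norm_neg, norm_div, Complex.norm_real, norm_mul, norm_mul, norm_mul, Complex.norm_I,
      Complex.norm_real, Complex.norm_intCast, Real.norm_of_nonneg hb.le,
      Real.norm_of_nonneg Real.pi_pos.le, Complex.norm_ofNat]
    field_simp
  have n2 : ‖(1 + ((c * k : ℝ) : ℂ) * Complex.I)⁻¹‖ ≤ c⁻¹ * |(k : ℝ)|⁻¹ := by
    rw [norm_inv, ← mul_inv, ← hct]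
    apply inv_anti₀ (by rw [hct]; positivity)
    have := Complex.abs_im_le_norm (1 + ((c * k : ℝ) : ℂ) * Complex.I)
    simpa using this
  rw [n1]
  rw [hct, Real.mul_rpow hc.le hkp.le] at hz
  calc _ ≤ (β - 1) / (2 * Real.pi) * |(k : ℝ)|⁻¹ * (c⁻¹ * |(k : ℝ)|⁻¹) *
        (K * (c ^ (3 / 4 : ℝ) * |(k : ℝ)| ^ (3 / 4 : ℝ))) := by gcongr
    _ = _ := by
        have : |(k : ℝ)| ^ (-(5 / 4) : ℝ) = |(k : ℝ)|⁻¹ * |(k : ℝ)|⁻¹ * |(k : ℝ)| ^ (3 / 4 : ℝ) := by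
          rw [← Real.rpow_neg_one, ← Real.rpow_add hkp, ← Real.rpow_add hkp]; norm_num
        rw [this]; ring

theorem hbeta_continuous_real_valued (β : ℝ) (hβ : 1 < β) :
    Summable (fun k : ℤ => ‖delangeCoeff β k‖) ∧
    Continuous (fun x : ℝ =>
      ∑' k : ℤ, delangeCoeff β k * Complex.exp (2 * Real.pi * Complex.I * k * x)) ∧
    ∀ x : ℝ,
      (∑' k : ℤ, delangeCoeff β k * Complex.exp (2 * Real.pi * Complex.I * k * x)).im = 0 := by
  have hs := aux_summable β hβ
  refine ⟨hs, ?_, fun x => ?_⟩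
  · refine continuous_tsum (fun k => by fun_prop) hs fun k x => ?_
    have : (2 * Real.pi * Complex.I * k * x : ℂ) = ((2 * Real.pi * k * x : ℝ) : ℂ) * Complex.I := by
      push_cast; ring
    rw [norm_mul, this, Complex.norm_exp_ofReal_mul_I, mul_one]
  · rw [← Complex.conj_eq_iff_im, Complex.conj_tsum, ← (Equiv.neg ℤ).tsum_eq]
    refine tsum_congr fun k => ?_
    rw [map_mul, aux_conj, ← Complex.exp_conj]
    simp only [Equiv.neg_apply, neg_neg, map_mul, Complex.conj_ofReal, Complex.conj_I, map_ofNat,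
      map_intCast]
    congr 2
    push_cast
    ring
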